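/- There exists a universal constant c > 0 with the following property. Let C, Γ : [0,1] → ℝ^d be continuous curves with ∫₀¹ C(t) dt = ∫₀¹ Γ(t) dt = 0, ‖C(t) − Γ(t)‖ ≤ 1/3 and ‖C(t)‖, ‖Γ(t)‖ < 1 for all t ∈ [0,1], whose first and second moments agree (∫₀¹ C(t)_j dt = ∫₀¹ Γ(t)_j dt and ∫₀¹ C(t)_j C(t)_k dt = ∫₀¹ Γ(t)_j Γ(t)_k dt for all j, k). Set Δ = ρ(C, Γ) and suppose Δ > 0 and σ ≥ 1. Then for every N ≤ c σ⁶ / Δ and every measurable function ψ : (ℝ^d)^N → {0, 1}, one has P_{C,σ}^{⊗N}(ψ = 1) + P_{Γ,σ}^{⊗N}(ψ = 0) ≥ 1/2; consequently, any test for deciding between C and Γ from N samples under a uniform prior errs with probability at least 1/4. -/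

import Mathlib

open MeasureTheory Filter Set
open scoped ENNReal
noncomputable section

/-- Density `φ_σ` of the isotropic Gaussian `N(0, σ²I_d)` on `ℝ^d`. -/
def gaussDens (d : ℕ) (σ : ℝ) (x : EuclideanSpace ℝ (Fin d)) : ℝ :=
  (2 * Real.pi * σ ^ 2) ^ (-(d : ℝ) / 2) * Real.exp (-‖x‖ ^ 2 / (2 * σ ^ 2))

/-- Density `p_{C,σ}(x) = ∫₀¹ φ_σ(x − C(t)) dt` of the noisy curve distribution, i.e. the law
of `C(τ) + σξ` with `τ` uniform on `[0,1]` and `ξ ~ N(0, I_d)` independent of `τ`. -/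
def noisyDens {d : ℕ} (C : ℝ → EuclideanSpace ℝ (Fin d)) (σ : ℝ)
    (x : EuclideanSpace ℝ (Fin d)) : ℝ :=
  ∫ t in (0:ℝ)..1, gaussDens d σ (x - C t)

/-- The noisy curve distribution `P_{C,σ}` on `ℝ^d`, defined by its density `p_{C,σ}`
with respect to Lebesgue measure. -/
def noisyMeasure {d : ℕ} (C : ℝ → EuclideanSpace ℝ (Fin d)) (σ : ℝ) :
    Measure (EuclideanSpace ℝ (Fin d)) :=
  volume.withDensity fun x => ENNReal.ofReal (noisyDens C σ x)

/-! A test with error sum below `1/2` would force the `χ²`-divergence between the two product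
measures to exceed `1`. As `1 + χ²` is multiplicative over products, it suffices to bound the
divergence for a single sample by a multiple of `Δ / σ⁶`. The curves are bounded and centered, so
the second density is at least a constant multiple of the Gaussian density `φ_σ`, and the divergence
is controlled by `∫ (p_C - p_Γ)² / φ_σ`. Completing the square turns this integral into the
expectation, over independent uniform `t` and `s`, of the mixed difference
`exp (⟪C t, C s⟫ / σ²) - exp (⟪C t, Γ s⟫ / σ²) - exp (⟪Γ t, C s⟫ / σ²) + exp (⟪Γ t, Γ s⟫ / σ²)`.
The terms of degree at most two of the exponential series cancel since the moments agree, and those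
of degree `k ≥ 3` are `O(k² / k! · σ⁻²ᵏ ‖C t - Γ t‖ ‖C s - Γ s‖)`.
-/

open scoped RealInnerProductSpace

section ChiSquare

variable {Ω : Type*} [MeasurableSpace Ω] {ν : Measure Ω} {p q : Ω → ℝ} {A : Set Ω}

/-- `p` is a probability density with respect to `ν`, as compared by the `χ²`-divergence
`∫ p² / q ∂ν - 1`. Integrability is implied, since the Bochner integral of a non-integrable function
is `0`. -/
structure IsProbDensity (ν : Measure Ω) (p : Ω → ℝ) : Prop where
  nonneg (x : Ω) : 0 ≤ p x
  integral_eq_one : ∫ x, p x ∂ν = 1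

namespace IsProbDensity

lemma integrable (hp : IsProbDensity ν p) : Integrable p ν :=
  .of_integral_ne_zero (by rw [hp.integral_eq_one]; exact one_ne_zero)

lemma withDensity_ofReal_apply (hp : IsProbDensity ν p) (hA : MeasurableSet A) :
    ν.withDensity (fun x => ENNReal.ofReal (p x)) A = ENNReal.ofReal (∫ x in A, p x ∂ν) := by
  rw [withDensity_apply _ hA,
    ofReal_integral_eq_lintegral_ofReal hp.integrable.restrict (ae_of_all _ hp.nonneg)]

lemma setIntegral_compl (hp : IsProbDensity ν p) (hA : MeasurableSet A) :
    ∫ x in Aᶜ, p x ∂ν = 1 - ∫ x in A, p x ∂ν := by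
  rw [MeasureTheory.setIntegral_compl hA hp.integrable, hp.integral_eq_one]

variable {ι : Type*} [Fintype ι] [SigmaFinite ν]

lemma pi (hp : IsProbDensity ν p) :
    IsProbDensity (Measure.pi fun _ : ι => ν) fun y => ∏ i, p (y i) where
  nonneg _ := Finset.prod_nonneg fun _ _ => hp.nonneg _
  integral_eq_one := by rw [integral_fintype_prod_eq_pow, hp.integral_eq_one, one_pow]

lemma pi_withDensity_ofReal (hp : IsProbDensity ν p) :
    Measure.pi (fun _ : ι => ν.withDensity fun x => ENNReal.ofReal (p x)) =
      (Measure.pi fun _ : ι => ν).withDensity fun y => ENNReal.ofReal (∏ i, p (y i)) := by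
  have : IsFiniteMeasure (ν.withDensity fun x => ENNReal.ofReal (p x)) :=
    isFiniteMeasure_withDensity_ofReal hp.integrable.2
  refine Measure.pi_eq fun s hs => ?_
  simp only [hp.pi.withDensity_ofReal_apply (MeasurableSet.univ_pi hs),
    hp.withDensity_ofReal_apply (hs _), Measure.restrict_pi_pi]
  rw [integral_fintype_prod_eq_prod fun _ : ι => p,
    ENNReal.ofReal_prod_of_nonneg fun i _ => integral_nonneg hp.nonneg]

end IsProbDensity

lemma two_mul_integral_sub_sq_mul_le (hp : Integrable p ν) (hq : Integrable q ν)
    (hq0 : ∀ x, 0 < q x) (hpq : Integrable (fun x => p x ^ 2 / q x) ν) (c : ℝ) :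
    2 * c * (∫ x, p x ∂ν) - c ^ 2 * ∫ x, q x ∂ν ≤ ∫ x, p x ^ 2 / q x ∂ν := by
  rw [← integral_const_mul, ← integral_const_mul,
    ← integral_sub (hp.const_mul _) (hq.const_mul _)]
  refine integral_mono ((hp.const_mul _).sub (hq.const_mul _)) hpq fun x => ?_
  rw [le_div_iff₀ (hq0 x)]
  nlinarith [sq_nonneg (p x - c * q x)]

lemma four_mul_sq_setIntegral_sub_le (hp : IsProbDensity ν p) (hq : IsProbDensity ν q)
    (hq0 : ∀ x, 0 < q x) (hpq : Integrable (fun x => p x ^ 2 / q x) ν) (hA : MeasurableSet A) :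
    4 * (∫ x in A, p x ∂ν - ∫ x in A, q x ∂ν) ^ 2 ≤ ∫ x, p x ^ 2 / q x ∂ν - 1 := by
  have tangent (B : Set Ω) := two_mul_integral_sub_sq_mul_le (ν := ν.restrict B)
    hp.integrable.restrict hq.integrable.restrict hq0 hpq.restrict
  set a := ∫ x in A, p x ∂ν with ha
  set b := ∫ x in A, q x ∂ν with hb
  -- With these slopes the two bounds add up to `1 + 4 (a - b) ^ 2`, whatever `a` and `b` are.
  have on_A := tangent A (1 + 2 * (a - b))
  have on_compl := tangent Aᶜ (1 - 2 * (a - b))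
  rw [hp.setIntegral_compl hA, hq.setIntegral_compl hA, ← ha, ← hb] at on_compl
  rw [← integral_add_compl hA hpq]
  linear_combination on_A + on_compl

lemma one_sub_sqrt_le_error_add_error (hp : IsProbDensity ν p) (hq : IsProbDensity ν q)
    (hq0 : ∀ x, 0 < q x) (hpq : Integrable (fun x => p x ^ 2 / q x) ν) (hA : MeasurableSet A) :
    ENNReal.ofReal (1 - √(∫ x, p x ^ 2 / q x ∂ν - 1) / 2) ≤
      ν.withDensity (fun x => ENNReal.ofReal (p x)) A +
        ν.withDensity (fun x => ENNReal.ofReal (q x)) Aᶜ := by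
  rw [hp.withDensity_ofReal_apply hA, hq.withDensity_ofReal_apply hA.compl,
    ← ENNReal.ofReal_add (integral_nonneg hp.nonneg) (integral_nonneg hq.nonneg),
    hq.setIntegral_compl hA]
  have hdiff : |2 * (∫ x in A, p x ∂ν - ∫ x in A, q x ∂ν)| ≤ √(∫ x, p x ^ 2 / q x ∂ν - 1) :=
    Real.abs_le_sqrt (by linear_combination four_mul_sq_setIntegral_sub_le hp hq hq0 hpq hA)
  exact ENNReal.ofReal_le_ofReal (by linarith [neg_le_of_abs_le hdiff])

lemma one_sub_sqrt_le_pi_error_add_error {ι : Type*} [Fintype ι] [SigmaFinite ν]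
    (hp : IsProbDensity ν p) (hq : IsProbDensity ν q) (hq0 : ∀ x, 0 < q x)
    (hpq : Integrable (fun x => p x ^ 2 / q x) ν) {A : Set (ι → Ω)} (hA : MeasurableSet A) :
    ENNReal.ofReal (1 - √((∫ x, p x ^ 2 / q x ∂ν) ^ Fintype.card ι - 1) / 2) ≤
      Measure.pi (fun _ : ι => ν.withDensity fun x => ENNReal.ofReal (p x)) A +
        Measure.pi (fun _ : ι => ν.withDensity fun x => ENNReal.ofReal (q x)) Aᶜ := by
  have hprod (y : ι → Ω) :
      (∏ i, p (y i)) ^ 2 / ∏ i, q (y i) = ∏ i, p (y i) ^ 2 / q (y i) := by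
    rw [Finset.prod_div_distrib, Finset.prod_pow]
  have hint : Integrable (fun y : ι → Ω => (∏ i, p (y i)) ^ 2 / ∏ i, q (y i))
      (Measure.pi fun _ => ν) := by
    simp only [hprod]
    exact .fintype_prod (f := fun _ x => p x ^ 2 / q x) fun _ => hpq
  rw [hp.pi_withDensity_ofReal, hq.pi_withDensity_ofReal,
    ← integral_fintype_prod_eq_pow (fun x => p x ^ 2 / q x)]
  simp only [← hprod]
  exact one_sub_sqrt_le_error_add_error hp.pi hq.pi (fun y => Finset.prod_pos fun i _ => hq0 _)
    hint hA

lemma sq_div_le_of_mul_le {a b r c : ℝ} (hc : 0 < c) (hr : 0 < r) (hb : c * r ≤ b) :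
    a ^ 2 / b ≤ 2 * a - b + c⁻¹ * ((a - b) ^ 2 / r) := by
  have hcr : 0 < c * r := mul_pos hc hr
  have hb0 : 0 < b := hcr.trans_le hb
  calc a ^ 2 / b = 2 * a - b + (a - b) ^ 2 / b := by field_simp; ring
    _ ≤ 2 * a - b + (a - b) ^ 2 / (c * r) := by gcongr
    _ = 2 * a - b + c⁻¹ * ((a - b) ^ 2 / r) := by field_simp

lemma integrable_sq_div_of_mul_le {r : Ω → ℝ} {c : ℝ} (hp : IsProbDensity ν p)
    (hq : IsProbDensity ν q) (hc : 0 < c) (hr : ∀ x, 0 < r x) (hrq : ∀ x, c * r x ≤ q x)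
    (hpqr : Integrable (fun x => (p x - q x) ^ 2 / r x) ν) :
    Integrable (fun x => p x ^ 2 / q x) ν := by
  refine (((hp.integrable.const_mul 2).sub hq.integrable).add (hpqr.const_mul c⁻¹)).mono'
    ((hp.integrable.aemeasurable.pow_const 2).div hq.integrable.aemeasurable).aestronglyMeasurable
    (ae_of_all _ fun x => ?_)
  rw [Real.norm_of_nonneg (div_nonneg (sq_nonneg _) (hq.nonneg x))]
  exact sq_div_le_of_mul_le hc (hr x) (hrq x)

lemma integral_sq_div_le_of_mul_le {r : Ω → ℝ} {c : ℝ} (hp : IsProbDensity ν p)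
    (hq : IsProbDensity ν q) (hc : 0 < c) (hr : ∀ x, 0 < r x) (hrq : ∀ x, c * r x ≤ q x)
    (hpqr : Integrable (fun x => (p x - q x) ^ 2 / r x) ν) :
    ∫ x, p x ^ 2 / q x ∂ν ≤ 1 + c⁻¹ * ∫ x, (p x - q x) ^ 2 / r x ∂ν := by
  have hlin : Integrable (fun x => 2 * p x - q x) ν := (hp.integrable.const_mul 2).sub hq.integrable
  calc ∫ x, p x ^ 2 / q x ∂ν
      ≤ ∫ x, (2 * p x - q x + c⁻¹ * ((p x - q x) ^ 2 / r x)) ∂ν :=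
        integral_mono (integrable_sq_div_of_mul_le hp hq hc hr hrq hpqr)
          (hlin.add (hpqr.const_mul c⁻¹)) fun x => sq_div_le_of_mul_le hc (hr x) (hrq x)
    _ = 1 + c⁻¹ * ∫ x, (p x - q x) ^ 2 / r x ∂ν := by
        rw [integral_add hlin (hpqr.const_mul c⁻¹), integral_sub (hp.integrable.const_mul 2)
          hq.integrable, integral_const_mul, integral_const_mul, hp.integral_eq_one,
          hq.integral_eq_one]
        norm_num

end ChiSquare

section MixedDifference

variable {E : Type*} [NormedAddCommGroup E] [InnerProductSpace ℝ E]

/-- The mixed second difference of the kernel `(x, y) ↦ g ⟪x, y⟫` over the rectangle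
`{x, x'} × {y, y'}`. For `g = exp`, its mean is the `χ²`-type distance between two Gaussian mixtures
relative to the Gaussian density. -/
def mixedDiff (g : ℝ → ℝ) (x x' y y' : E) : ℝ :=
  g ⟪x, y⟫ - g ⟪x, y'⟫ - g ⟪x', y⟫ + g ⟪x', y'⟫

lemma mixedDiff_pow_one (x x' y y' : E) : mixedDiff (· ^ 1) x x' y y' = ⟪x - x', y - y'⟫ := by
  simp only [mixedDiff, inner_sub_left, inner_sub_right]
  ring

lemma abs_inner_le_sq {x y : E} {R : ℝ} (hx : ‖x‖ ≤ R) (hy : ‖y‖ ≤ R) : |⟪x, y⟫| ≤ R ^ 2 :=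
  (abs_real_inner_le_norm x y).trans <| by
    rw [sq]
    exact mul_le_mul hx hy (norm_nonneg y) ((norm_nonneg x).trans hx)

lemma abs_inner_pow_sub_inner_pow_le {x y y' : E} {R : ℝ} (hx : ‖x‖ ≤ R) (hy : ‖y‖ ≤ R)
    (hy' : ‖y'‖ ≤ R) (k : ℕ) :
    |⟪x, y⟫ ^ (k + 1) - ⟪x, y'⟫ ^ (k + 1)| ≤ (k + 1) * (R ^ 2) ^ k * (R * ‖y - y'‖) := by
  have hR : 0 ≤ R := (norm_nonneg x).trans hx
  have hinner : |⟪x, y⟫ - ⟪x, y'⟫| ≤ R * ‖y - y'‖ := by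
    rw [← inner_sub_right]
    exact (abs_real_inner_le_norm _ _).trans (by gcongr)
  have hmax : max |⟪x, y⟫| |⟪x, y'⟫| ≤ R ^ 2 :=
    max_le (abs_inner_le_sq hx hy) (abs_inner_le_sq hx hy')
  calc |⟪x, y⟫ ^ (k + 1) - ⟪x, y'⟫ ^ (k + 1)|
      ≤ |⟪x, y⟫ - ⟪x, y'⟫| * (k + 1 : ℕ) * max |⟪x, y⟫| |⟪x, y'⟫| ^ k := abs_pow_sub_pow_le ..
    _ ≤ (R * ‖y - y'‖) * (k + 1 : ℕ) * (R ^ 2) ^ k := by gcongr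
    _ = (k + 1) * (R ^ 2) ^ k * (R * ‖y - y'‖) := by push_cast; ring

lemma mixedDiff_pow_succ (k : ℕ) (x x' y y' : E) :
    mixedDiff (· ^ (k + 1)) x x' y y' =
      ⟪x, y⟫ * mixedDiff (· ^ k) x x' y y' + ⟪x, y - y'⟫ * (⟪x, y'⟫ ^ k - ⟪x', y'⟫ ^ k) +
        ⟪x - x', y⟫ * (⟪x', y⟫ ^ k - ⟪x', y'⟫ ^ k) + ⟪x - x', y - y'⟫ * ⟪x', y'⟫ ^ k := by
  simp only [mixedDiff, inner_sub_left, inner_sub_right]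
  ring

lemma abs_mixedDiff_pow_le {x x' y y' : E} {R : ℝ} (hx : ‖x‖ ≤ R) (hx' : ‖x'‖ ≤ R)
    (hy : ‖y‖ ≤ R) (hy' : ‖y'‖ ≤ R) (k : ℕ) :
    |mixedDiff (· ^ (k + 1)) x x' y y'| ≤
      (k + 1) ^ 2 * (R ^ 2) ^ k * (‖x - x'‖ * ‖y - y'‖) := by
  induction k with
  | zero =>
    simpa only [zero_add, mixedDiff_pow_one, Nat.cast_zero, one_pow, pow_zero, one_mul]
      using abs_real_inner_le_norm (x - x') (y - y')
  | succ k ih =>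
    have hdiff_left := abs_inner_pow_sub_inner_pow_le hy' hx hx' k
    have hdiff_right := abs_inner_pow_sub_inner_pow_le hx' hy hy' k
    simp only [real_inner_comm _ y'] at hdiff_left
    have hpow : |⟪x', y'⟫ ^ (k + 1)| ≤ (R ^ 2) ^ (k + 1) := by
      rw [abs_pow]
      gcongr
      exact abs_inner_le_sq hx' hy'
    rw [mixedDiff_pow_succ]
    calc _ ≤ |⟪x, y⟫| * |mixedDiff (· ^ (k + 1)) x x' y y'|
            + |⟪x, y - y'⟫| * |⟪x, y'⟫ ^ (k + 1) - ⟪x', y'⟫ ^ (k + 1)|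
            + |⟪x - x', y⟫| * |⟪x', y⟫ ^ (k + 1) - ⟪x', y'⟫ ^ (k + 1)|
            + |⟪x - x', y - y'⟫| * |⟪x', y'⟫ ^ (k + 1)| := by
          simp only [← abs_mul]
          exact (abs_add_le _ _).trans (add_le_add_left (abs_add_three _ _ _) _)
      _ ≤ R ^ 2 * ((k + 1) ^ 2 * (R ^ 2) ^ k * (‖x - x'‖ * ‖y - y'‖))
            + R * ‖y - y'‖ * ((k + 1) * (R ^ 2) ^ k * (R * ‖x - x'‖))
            + ‖x - x'‖ * R * ((k + 1) * (R ^ 2) ^ k * (R * ‖y - y'‖))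
            + ‖x - x'‖ * ‖y - y'‖ * (R ^ 2) ^ (k + 1) := by
          have hR : 0 ≤ R := (norm_nonneg x).trans hx
          gcongr
          · exact abs_inner_le_sq hx hy
          · exact (abs_real_inner_le_norm _ _).trans (by gcongr)
          · exact (abs_real_inner_le_norm _ _).trans (by gcongr)
          · exact abs_real_inner_le_norm _ _
      _ = ((k + 1 : ℕ) + 1) ^ 2 * (R ^ 2) ^ (k + 1) * (‖x - x'‖ * ‖y - y'‖) := by
          push_cast
          ring

/-- The quadratic Taylor polynomial of `exp` at `0`, the part of `exp` on which matching first and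
second moments make the mean mixed difference vanish. -/
def expTaylorTwo (u : ℝ) : ℝ := 1 + u + u ^ 2 / 2

lemma hasSum_exp_sub_expTaylorTwo (u : ℝ) :
    HasSum (fun k : ℕ => u ^ (k + 3) / (k + 3).factorial) (Real.exp u - expTaylorTwo u) := by
  have hexp : HasSum (fun k : ℕ => u ^ k / k.factorial) (Real.exp u) := by
    rw [Real.exp_eq_exp_ℝ]
    exact NormedSpace.expSeries_div_hasSum_exp u
  simpa [expTaylorTwo, Finset.sum_range_succ] using (hasSum_nat_add_iff' 3).2 hexp

lemma sq_div_factorial_add_three_le (k : ℕ) :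
    ((k : ℝ) + 3) ^ 2 / (k + 3).factorial ≤ 3 / k.factorial := by
  have hfactorial : ((k + 3).factorial : ℝ) = (k + 3) * ((k + 2) * (k + 1)) * k.factorial := by
    simp only [Nat.factorial_succ]
    push_cast
    ring
  rw [hfactorial, div_le_div_iff₀ (by positivity) (by positivity)]
  have : ((k : ℝ) + 3) ^ 2 ≤ 3 * ((k + 3) * ((k + 2) * (k + 1))) := by
    have hk : (0 : ℝ) ≤ k := k.cast_nonneg
    nlinarith [mul_nonneg hk hk, mul_nonneg (mul_nonneg hk hk) hk]
  rw [← mul_assoc]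
  gcongr

lemma mixedDiff_sub (g h : ℝ → ℝ) (x x' y y' : E) :
    mixedDiff (fun u => g u - h u) x x' y y' = mixedDiff g x x' y y' - mixedDiff h x x' y y' := by
  simp only [mixedDiff]
  ring

lemma hasSum_mixedDiff_exp_sub_expTaylorTwo (x x' y y' : E) :
    HasSum (fun k : ℕ => mixedDiff (· ^ (k + 3)) x x' y y' / (k + 3).factorial)
      (mixedDiff Real.exp x x' y y' - mixedDiff expTaylorTwo x x' y y') := by
  rw [← mixedDiff_sub]
  convert! (((hasSum_exp_sub_expTaylorTwo ⟪x, y⟫).sub (hasSum_exp_sub_expTaylorTwo ⟪x, y'⟫)).sub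
    (hasSum_exp_sub_expTaylorTwo ⟪x', y⟫)).add (hasSum_exp_sub_expTaylorTwo ⟪x', y'⟫) using 2
  simp only [mixedDiff, add_div, sub_div]

lemma mixedDiff_exp_sub_mixedDiff_expTaylorTwo_le {x x' y y' : E} {R : ℝ} (hx : ‖x‖ ≤ R)
    (hx' : ‖x'‖ ≤ R) (hy : ‖y‖ ≤ R) (hy' : ‖y'‖ ≤ R) :
    mixedDiff Real.exp x x' y y' - mixedDiff expTaylorTwo x x' y y' ≤
      3 * R ^ 4 * Real.exp (R ^ 2) * (‖x - x'‖ * ‖y - y'‖) := by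
  have hexp : HasSum (fun k : ℕ => 3 * R ^ 4 * (‖x - x'‖ * ‖y - y'‖) * ((R ^ 2) ^ k / k.factorial))
      (3 * R ^ 4 * (‖x - x'‖ * ‖y - y'‖) * Real.exp (R ^ 2)) := by
    rw [Real.exp_eq_exp_ℝ]
    exact (NormedSpace.expSeries_div_hasSum_exp (R ^ 2)).mul_left _
  refine (hasSum_le (fun k => ?_) (hasSum_mixedDiff_exp_sub_expTaylorTwo x x' y y') hexp).trans_eq
    (by ring)
  calc mixedDiff (· ^ (k + 3)) x x' y y' / (k + 3).factorial
      ≤ ((k + 2 : ℕ) + 1) ^ 2 * (R ^ 2) ^ (k + 2) * (‖x - x'‖ * ‖y - y'‖) /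
          (k + 3).factorial := by
        gcongr
        exact (le_abs_self _).trans (abs_mixedDiff_pow_le hx hx' hy hy' (k + 2))
    _ = ((k : ℝ) + 3) ^ 2 / (k + 3).factorial *
          (R ^ 4 * (R ^ 2) ^ k * (‖x - x'‖ * ‖y - y'‖)) := by
        push_cast
        ring
    _ ≤ 3 / k.factorial * (R ^ 4 * (R ^ 2) ^ k * (‖x - x'‖ * ‖y - y'‖)) := by
        exact mul_le_mul_of_nonneg_right (sq_div_factorial_add_three_le k) (by positivity)
    _ = 3 * R ^ 4 * (‖x - x'‖ * ‖y - y'‖) * ((R ^ 2) ^ k / k.factorial) := by ring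

end MixedDifference

section BoundedRandomVectors

variable {T E : Type*} [MeasurableSpace T] [NormedAddCommGroup E] {μ : Measure T}
  {X Y : T → E} {R : ℝ}

/-- `X` is a random vector on `(T, μ)` with values almost surely in the closed ball of radius `R`
about the origin: the assumption on a curve, with its parameter interval replaced by `(T, μ)`. -/
structure IsAEBoundedBy (X : T → E) (R : ℝ) (μ : Measure T) : Prop where
  aestronglyMeasurable : AEStronglyMeasurable X μ
  ae_norm_le : ∀ᵐ t ∂μ, ‖X t‖ ≤ R

lemma isAEBoundedBy_restrict [TopologicalSpace T] [OpensMeasurableSpace T]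
    [SecondCountableTopologyEither T E] {s : Set T} (hs : MeasurableSet s) (hX : ContinuousOn X s)
    (hR : ∀ t ∈ s, ‖X t‖ ≤ R) : IsAEBoundedBy X R (μ.restrict s) where
  aestronglyMeasurable := hX.aestronglyMeasurable hs
  ae_norm_le := ae_restrict_of_forall_mem hs hR

lemma IsAEBoundedBy.memLp [IsFiniteMeasure μ] (hX : IsAEBoundedBy X R μ) (p : ℝ≥0∞) :
    MemLp X p μ :=
  .of_bound hX.aestronglyMeasurable R hX.ae_norm_le

lemma IsAEBoundedBy.integrable [IsFiniteMeasure μ] (hX : IsAEBoundedBy X R μ) :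
    Integrable X μ :=
  memLp_one_iff_integrable.1 (hX.memLp 1)

lemma IsAEBoundedBy.const_smul [NormedSpace ℝ E] (hX : IsAEBoundedBy X R μ) (c : ℝ) :
    IsAEBoundedBy (fun t => c • X t) (|c| * R) μ where
  aestronglyMeasurable := hX.aestronglyMeasurable.const_smul c
  ae_norm_le := hX.ae_norm_le.mono fun t ht => by
    rw [norm_smul, Real.norm_eq_abs]
    gcongr

lemma sq_integral_le_integral_sq [IsProbabilityMeasure μ] {f : T → ℝ} (hf : MemLp f 2 μ) :
    (∫ t, f t ∂μ) ^ 2 ≤ ∫ t, f t ^ 2 ∂μ := by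
  have hvar := ProbabilityTheory.variance_nonneg f μ
  rw [ProbabilityTheory.variance_eq_sub hf] at hvar
  exact sub_nonneg.1 hvar

variable [InnerProductSpace ℝ E]

lemma IsAEBoundedBy.integrable_comp_inner [IsFiniteMeasure μ] (hX : IsAEBoundedBy X R μ)
    (hY : IsAEBoundedBy Y R μ) {g : ℝ → ℝ} (hg : Continuous g) :
    Integrable (fun z : T × T => g ⟪X z.1, Y z.2⟫) (μ.prod μ) := by
  obtain ⟨M, hM⟩ := (isCompact_Icc (a := -R ^ 2) (b := R ^ 2))
    |>.exists_bound_of_continuousOn hg.continuousOn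
  refine .of_bound (hg.comp_aestronglyMeasurable
    (hX.aestronglyMeasurable.comp_fst.inner hY.aestronglyMeasurable.comp_snd)) M ?_
  filter_upwards [Measure.quasiMeasurePreserving_fst.ae hX.ae_norm_le,
    Measure.quasiMeasurePreserving_snd.ae hY.ae_norm_le] with z hXz hYz
  exact hM _ (abs_le.1 (abs_inner_le_sq hXz hYz))

lemma IsAEBoundedBy.integrable_mixedDiff [IsFiniteMeasure μ] (hX : IsAEBoundedBy X R μ)
    (hY : IsAEBoundedBy Y R μ) {g : ℝ → ℝ} (hg : Continuous g) :
    Integrable (fun z : T × T => mixedDiff g (X z.1) (Y z.1) (X z.2) (Y z.2)) (μ.prod μ) :=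
  (((hX.integrable_comp_inner hX hg).sub (hX.integrable_comp_inner hY hg)).sub
    (hY.integrable_comp_inner hX hg)).add (hY.integrable_comp_inner hY hg)

lemma integral_sub_sub_add {α : Type*} [MeasurableSpace α] {ν : Measure α} {f g h k : α → ℝ}
    (hf : Integrable f ν) (hg : Integrable g ν) (hh : Integrable h ν) (hk : Integrable k ν) :
    ∫ x, (f x - g x - h x + k x) ∂ν =
      ∫ x, f x ∂ν - ∫ x, g x ∂ν - ∫ x, h x ∂ν + ∫ x, k x ∂ν := by
  have hfg : Integrable (fun x => f x - g x) ν := hf.sub hg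
  have hfgh : Integrable (fun x => f x - g x - h x) ν := hfg.sub hh
  rw [integral_add hfgh hk, integral_sub hfg hh, integral_sub hf hg]

lemma IsAEBoundedBy.integral_mixedDiff [IsFiniteMeasure μ] (hX : IsAEBoundedBy X R μ)
    (hY : IsAEBoundedBy Y R μ) {g : ℝ → ℝ} (hg : Continuous g) :
    ∫ z, mixedDiff g (X z.1) (Y z.1) (X z.2) (Y z.2) ∂(μ.prod μ) =
      ∫ z, g ⟪X z.1, X z.2⟫ ∂(μ.prod μ) - ∫ z, g ⟪X z.1, Y z.2⟫ ∂(μ.prod μ) -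
        ∫ z, g ⟪Y z.1, X z.2⟫ ∂(μ.prod μ) + ∫ z, g ⟪Y z.1, Y z.2⟫ ∂(μ.prod μ) :=
  integral_sub_sub_add (hX.integrable_comp_inner hX hg) (hX.integrable_comp_inner hY hg)
    (hY.integrable_comp_inner hX hg) (hY.integrable_comp_inner hY hg)

lemma IsAEBoundedBy.integral_mixedDiff_eq_zero [IsFiniteMeasure μ] (hX : IsAEBoundedBy X R μ)
    (hY : IsAEBoundedBy Y R μ) {g : ℝ → ℝ} (hg : Continuous g)
    (hXY : ∀ v, ∫ t, g ⟪X t, v⟫ ∂μ = ∫ t, g ⟪Y t, v⟫ ∂μ) :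
    ∫ z, mixedDiff g (X z.1) (Y z.1) (X z.2) (Y z.2) ∂(μ.prod μ) = 0 := by
  have swap_left {Z : T → E} (hZ : IsAEBoundedBy Z R μ) :
      ∫ z, g ⟪X z.1, Z z.2⟫ ∂(μ.prod μ) = ∫ z, g ⟪Y z.1, Z z.2⟫ ∂(μ.prod μ) := by
    rw [integral_prod_symm _ (hX.integrable_comp_inner hZ hg),
      integral_prod_symm _ (hY.integrable_comp_inner hZ hg)]
    simp only [hXY]
  rw [hX.integral_mixedDiff hY hg, swap_left hX, swap_left hY]
  ring

@[fun_prop]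
lemma continuous_expTaylorTwo : Continuous expTaylorTwo := by
  unfold expTaylorTwo
  fun_prop

lemma IsAEBoundedBy.integral_expTaylorTwo_inner [IsProbabilityMeasure μ]
    (hX : IsAEBoundedBy X R μ) (v : E) :
    ∫ t, expTaylorTwo ⟪X t, v⟫ ∂μ =
      1 + ∫ t, ⟪X t, v⟫ ∂μ + (∫ t, ⟪X t, v⟫ ^ 2 ∂μ) / 2 := by
  have hlin : Integrable (fun t => ⟪X t, v⟫) μ := hX.integrable.inner_const v
  have hquad : Integrable (fun t => ⟪X t, v⟫ ^ 2 / 2) μ :=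
    ((hX.memLp 2).inner_const v).integrable_sq.div_const 2
  have haff : Integrable (fun t => 1 + ⟪X t, v⟫) μ := (integrable_const 1).add hlin
  simp only [expTaylorTwo]
  rw [integral_add haff hquad,
    integral_add (integrable_const 1) hlin, integral_div, integral_const, probReal_univ, one_smul]

lemma IsAEBoundedBy.integral_mixedDiff_exp_le [IsProbabilityMeasure μ] (hX : IsAEBoundedBy X R μ)
    (hY : IsAEBoundedBy Y R μ) (hmean : ∀ v, ∫ t, ⟪X t, v⟫ ∂μ = ∫ t, ⟪Y t, v⟫ ∂μ)
    (hsecond : ∀ v, ∫ t, ⟪X t, v⟫ ^ 2 ∂μ = ∫ t, ⟪Y t, v⟫ ^ 2 ∂μ) :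
    ∫ z, mixedDiff Real.exp (X z.1) (Y z.1) (X z.2) (Y z.2) ∂(μ.prod μ) ≤
      3 * R ^ 4 * Real.exp (R ^ 2) * ∫ t, ‖X t - Y t‖ ^ 2 ∂μ := by
  have hexp := hX.integrable_mixedDiff hY Real.continuous_exp
  have htaylor := hX.integrable_mixedDiff hY continuous_expTaylorTwo
  have htaylor_zero : ∫ z, mixedDiff expTaylorTwo (X z.1) (Y z.1) (X z.2) (Y z.2) ∂(μ.prod μ) = 0 :=
    hX.integral_mixedDiff_eq_zero hY continuous_expTaylorTwo fun v => by
      rw [hX.integral_expTaylorTwo_inner, hY.integral_expTaylorTwo_inner, hmean, hsecond]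
  have hdist : MemLp (fun t => ‖X t - Y t‖) 2 μ := ((hX.memLp 2).sub (hY.memLp 2)).norm
  have hdist_prod := (hdist.integrable one_le_two).mul_prod (hdist.integrable one_le_two)
  have hremainder : ∀ᵐ z ∂(μ.prod μ),
      mixedDiff Real.exp (X z.1) (Y z.1) (X z.2) (Y z.2) -
          mixedDiff expTaylorTwo (X z.1) (Y z.1) (X z.2) (Y z.2) ≤
        3 * R ^ 4 * Real.exp (R ^ 2) * (‖X z.1 - Y z.1‖ * ‖X z.2 - Y z.2‖) := by
    have hbound := hX.ae_norm_le.and hY.ae_norm_le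
    filter_upwards [Measure.quasiMeasurePreserving_fst.ae hbound,
      Measure.quasiMeasurePreserving_snd.ae hbound] with z h₁ h₂
    exact mixedDiff_exp_sub_mixedDiff_expTaylorTwo_le h₁.1 h₁.2 h₂.1 h₂.2
  calc ∫ z, mixedDiff Real.exp (X z.1) (Y z.1) (X z.2) (Y z.2) ∂(μ.prod μ)
      = ∫ z, (mixedDiff Real.exp (X z.1) (Y z.1) (X z.2) (Y z.2) -
          mixedDiff expTaylorTwo (X z.1) (Y z.1) (X z.2) (Y z.2)) ∂(μ.prod μ) := by
        rw [integral_sub hexp htaylor, htaylor_zero, sub_zero]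
    _ ≤ ∫ z, 3 * R ^ 4 * Real.exp (R ^ 2) * (‖X z.1 - Y z.1‖ * ‖X z.2 - Y z.2‖) ∂(μ.prod μ) :=
        integral_mono_ae (hexp.sub htaylor) (hdist_prod.const_mul _) hremainder
    _ = 3 * R ^ 4 * Real.exp (R ^ 2) * (∫ t, ‖X t - Y t‖ ∂μ) ^ 2 := by
        rw [integral_const_mul, integral_prod_mul (fun t => ‖X t - Y t‖) fun t => ‖X t - Y t‖,
          sq (∫ t, ‖X t - Y t‖ ∂μ)]
    _ ≤ 3 * R ^ 4 * Real.exp (R ^ 2) * ∫ t, ‖X t - Y t‖ ^ 2 ∂μ := by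
        gcongr
        exact sq_integral_le_integral_sq hdist

end BoundedRandomVectors

lemma integral_inner_sq_eq_sum {T ι : Type*} [MeasurableSpace T] [Fintype ι] {μ : Measure T}
    {X : T → EuclideanSpace ℝ ι} (hX : MemLp X 2 μ) (v : EuclideanSpace ℝ ι) :
    ∫ t, ⟪X t, v⟫ ^ 2 ∂μ = ∑ j, ∑ k, v j * v k * ∫ t, X t j * X t k ∂μ := by
  have hexpand (t : T) : ⟪X t, v⟫ ^ 2 = ∑ j, ∑ k, v j * v k * (X t j * X t k) := by
    simp only [sq, PiLp.inner_apply, Finset.sum_mul_sum, RCLike.inner_apply, conj_trivial,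
      mul_mul_mul_comm]
  have hint (j k : ι) : Integrable (fun t => v j * v k * (X t j * X t k)) μ :=
    ((hX.eval_piLp j).integrable_mul (hX.eval_piLp k)).const_mul _
  simp only [hexpand]
  rw [integral_finsetSum _ fun j _ => integrable_finsetSum _ fun k _ => hint j k]
  refine Finset.sum_congr rfl fun j _ => ?_
  rw [integral_finsetSum _ fun k _ => hint j k]
  simp only [integral_const_mul]

section Translates

variable {S G : Type*} [MeasurableSpace S] {ν : Measure S} [SFinite ν]
  [NormedAddCommGroup G] [SecondCountableTopology G] [MeasurableSpace G] [BorelSpace G]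
  {lam : Measure G} [SFinite lam] [lam.IsAddRightInvariant] {w : S → ℝ} {f : G → ℝ} {Z : S → G}

lemma integrable_mul_comp_sub (hw : Integrable w ν) (hf : Integrable f lam)
    (hf_cont : Continuous f) (hZ : AEStronglyMeasurable Z ν) :
    Integrable (fun a : G × S => w a.2 * f (a.1 - Z a.2)) (lam.prod ν) := by
  have hmeas : AEStronglyMeasurable (fun a : G × S => w a.2 * f (a.1 - Z a.2)) (lam.prod ν) :=
    hw.aestronglyMeasurable.comp_snd.mul <| hf_cont.comp_aestronglyMeasurable <|
      measurable_fst.aestronglyMeasurable.sub hZ.comp_snd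
  refine (integrable_prod_iff' hmeas).2
    ⟨ae_of_all _ fun z => (hf.comp_sub_right (Z z)).const_mul (w z), ?_⟩
  simp only [norm_mul, integral_const_mul, integral_sub_right_eq_self fun x => ‖f x‖]
  exact hw.norm.mul_const _

lemma integral_integral_mul_comp_sub (hw : Integrable w ν) (hf : Integrable f lam)
    (hf_cont : Continuous f) (hZ : AEStronglyMeasurable Z ν) :
    ∫ x, ∫ z, w z * f (x - Z z) ∂ν ∂lam = (∫ z, w z ∂ν) * ∫ x, f x ∂lam := by
  rw [integral_integral_swap (integrable_mul_comp_sub hw hf hf_cont hZ)]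
  simp only [integral_const_mul, integral_sub_right_eq_self f, integral_mul_const]

end Translates

section Gaussian

variable {d : ℕ} {σ : ℝ}

lemma gaussDens_pos (hσ : σ ≠ 0) (x : EuclideanSpace ℝ (Fin d)) : 0 < gaussDens d σ x := by
  unfold gaussDens
  positivity

@[fun_prop]
lemma continuous_gaussDens : Continuous (gaussDens d σ) := by
  unfold gaussDens
  fun_prop

lemma gaussDens_le_gaussDens_zero (x : EuclideanSpace ℝ (Fin d)) :
    gaussDens d σ x ≤ gaussDens d σ 0 := by
  unfold gaussDens
  gcongr ?_ * Real.exp (-?_ / _)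
  rw [norm_zero]
  gcongr
  exact norm_nonneg x

lemma isProbDensity_gaussDens (hσ : σ ≠ 0) : IsProbDensity volume (gaussDens d σ) where
  nonneg x := (gaussDens_pos hσ x).le
  integral_eq_one := by
    have hσ2 : 0 < 2 * σ ^ 2 := by positivity
    have hexponent (x : EuclideanSpace ℝ (Fin d)) :
        -‖x‖ ^ 2 / (2 * σ ^ 2) = -(2 * σ ^ 2)⁻¹ * ‖x‖ ^ 2 := by ring
    simp only [gaussDens, hexponent]
    rw [integral_const_mul, GaussianFourier.integral_rexp_neg_mul_sq_norm (inv_pos.2 hσ2),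
      finrank_euclideanSpace_fin, div_inv_eq_mul, ← mul_assoc, mul_comm Real.pi 2,
      ← Real.rpow_add (by positivity), neg_div, neg_add_cancel, Real.rpow_zero]

lemma gaussDens_sub (x a : EuclideanSpace ℝ (Fin d)) :
    gaussDens d σ (x - a) =
      gaussDens d σ x * Real.exp (⟪x, a⟫ / σ ^ 2 - ‖a‖ ^ 2 / (2 * σ ^ 2)) := by
  rw [gaussDens, gaussDens, mul_assoc (_ ^ _), ← Real.exp_add, norm_sub_sq_real]
  congr 2
  ring

lemma gaussDens_sub_mul_gaussDens_sub_div (hσ : σ ≠ 0) (x a b : EuclideanSpace ℝ (Fin d)) :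
    gaussDens d σ (x - a) * gaussDens d σ (x - b) / gaussDens d σ x =
      Real.exp ⟪σ⁻¹ • a, σ⁻¹ • b⟫ * gaussDens d σ (x - (a + b)) := by
  rw [div_eq_iff (gaussDens_pos hσ x).ne', gaussDens_sub x a, gaussDens_sub x b,
    gaussDens_sub x (a + b), mul_mul_mul_comm, ← Real.exp_add, mul_left_comm, ← Real.exp_add,
    mul_right_comm]
  congr 3
  rw [inner_add_right, norm_add_sq_real, real_inner_smul_left, real_inner_smul_right]
  ring

end Gaussian

section GaussianMixture

variable {T : Type*} [MeasurableSpace T] {μ : Measure T} {d : ℕ}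
  {X Y : T → EuclideanSpace ℝ (Fin d)} {R σ : ℝ}

/-- The density of the Gaussian mixture with centers `X`: if `μ` is a probability measure, this is
the density of `X + σξ`, with `ξ` a standard Gaussian vector independent of `X`. -/
def mixDens (μ : Measure T) (X : T → EuclideanSpace ℝ (Fin d)) (σ : ℝ)
    (x : EuclideanSpace ℝ (Fin d)) : ℝ :=
  ∫ t, gaussDens d σ (x - X t) ∂μ

/-- The Gaussian mixture with centers `X`: if `μ` is a probability measure, this is the law of
`X + σξ`, with `ξ` a standard Gaussian vector independent of `X`. -/
def mixMeasure (μ : Measure T) (X : T → EuclideanSpace ℝ (Fin d)) (σ : ℝ) :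
    Measure (EuclideanSpace ℝ (Fin d)) :=
  volume.withDensity fun x => ENNReal.ofReal (mixDens μ X σ x)

lemma isProbDensity_mixDens [IsProbabilityMeasure μ] (hσ : σ ≠ 0)
    (hX : AEStronglyMeasurable X μ) : IsProbDensity volume (mixDens μ X σ) where
  nonneg _ := integral_nonneg fun _ => (gaussDens_pos hσ _).le
  integral_eq_one := by
    have hφ := isProbDensity_gaussDens (d := d) hσ
    have hone := integral_integral_mul_comp_sub (integrable_const (1 : ℝ)) hφ.integrable
      continuous_gaussDens hX
    simpa only [mixDens, one_mul, integral_const, probReal_univ, one_smul, hφ.integral_eq_one]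
      using hone

lemma mixDens_mul_mixDens_div_gaussDens [SFinite μ] (hσ : σ ≠ 0)
    (x : EuclideanSpace ℝ (Fin d)) :
    mixDens μ X σ x * mixDens μ Y σ x / gaussDens d σ x =
      ∫ z, Real.exp ⟪σ⁻¹ • X z.1, σ⁻¹ • Y z.2⟫ * gaussDens d σ (x - (X z.1 + Y z.2))
        ∂(μ.prod μ) := by
  simp only [← gaussDens_sub_mul_gaussDens_sub_div hσ, integral_div, mixDens]
  rw [integral_prod_mul (fun t => gaussDens d σ (x - X t)) fun t => gaussDens d σ (x - Y t)]

lemma IsAEBoundedBy.integrable_exp_inner_smul [IsFiniteMeasure μ] (hX : IsAEBoundedBy X R μ)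
    (hY : IsAEBoundedBy Y R μ) (c : ℝ) :
    Integrable (fun z : T × T => Real.exp ⟪c • X z.1, c • Y z.2⟫) (μ.prod μ) :=
  (hX.const_smul c).integrable_comp_inner (hY.const_smul c) Real.continuous_exp

lemma IsAEBoundedBy.integrable_mixDens_mul_mixDens_div_gaussDens [IsFiniteMeasure μ]
    (hX : IsAEBoundedBy X R μ) (hY : IsAEBoundedBy Y R μ) (hσ : σ ≠ 0) :
    Integrable fun x => mixDens μ X σ x * mixDens μ Y σ x / gaussDens d σ x := by
  simp only [mixDens_mul_mixDens_div_gaussDens hσ]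
  exact (integrable_mul_comp_sub (hX.integrable_exp_inner_smul hY σ⁻¹)
    (isProbDensity_gaussDens hσ).integrable continuous_gaussDens
    (hX.aestronglyMeasurable.comp_fst.add hY.aestronglyMeasurable.comp_snd)).integral_prod_left

lemma IsAEBoundedBy.integral_mixDens_mul_mixDens_div_gaussDens [IsFiniteMeasure μ]
    (hX : IsAEBoundedBy X R μ) (hY : IsAEBoundedBy Y R μ) (hσ : σ ≠ 0) :
    ∫ x, mixDens μ X σ x * mixDens μ Y σ x / gaussDens d σ x =
      ∫ z, Real.exp ⟪σ⁻¹ • X z.1, σ⁻¹ • Y z.2⟫ ∂(μ.prod μ) := by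
  simp only [mixDens_mul_mixDens_div_gaussDens hσ]
  have hφ := isProbDensity_gaussDens (d := d) hσ
  have hcenters : AEStronglyMeasurable (fun z : T × T => X z.1 + Y z.2) (μ.prod μ) :=
    hX.aestronglyMeasurable.comp_fst.add hY.aestronglyMeasurable.comp_snd
  rw [integral_integral_mul_comp_sub (hX.integrable_exp_inner_smul hY σ⁻¹) hφ.integrable
    continuous_gaussDens hcenters, hφ.integral_eq_one, mul_one]

lemma sq_sub_div_eq (a b c : ℝ) :
    (a - b) ^ 2 / c = a * a / c - a * b / c - b * a / c + b * b / c := by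
  ring

lemma IsAEBoundedBy.integrable_sq_mixDens_sub_div_gaussDens [IsFiniteMeasure μ]
    (hX : IsAEBoundedBy X R μ) (hY : IsAEBoundedBy Y R μ) (hσ : σ ≠ 0) :
    Integrable fun x => (mixDens μ X σ x - mixDens μ Y σ x) ^ 2 / gaussDens d σ x := by
  simp only [sq_sub_div_eq]
  exact (((hX.integrable_mixDens_mul_mixDens_div_gaussDens hX hσ).sub
    (hX.integrable_mixDens_mul_mixDens_div_gaussDens hY hσ)).sub
    (hY.integrable_mixDens_mul_mixDens_div_gaussDens hX hσ)).add
    (hY.integrable_mixDens_mul_mixDens_div_gaussDens hY hσ)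

lemma IsAEBoundedBy.integral_sq_mixDens_sub_div_gaussDens [IsFiniteMeasure μ]
    (hX : IsAEBoundedBy X R μ) (hY : IsAEBoundedBy Y R μ) (hσ : σ ≠ 0) :
    ∫ x, (mixDens μ X σ x - mixDens μ Y σ x) ^ 2 / gaussDens d σ x =
      ∫ z, mixedDiff Real.exp (σ⁻¹ • X z.1) (σ⁻¹ • Y z.1) (σ⁻¹ • X z.2) (σ⁻¹ • Y z.2)
        ∂(μ.prod μ) := by
  simp only [sq_sub_div_eq]
  rw [integral_sub_sub_add (hX.integrable_mixDens_mul_mixDens_div_gaussDens hX hσ)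
    (hX.integrable_mixDens_mul_mixDens_div_gaussDens hY hσ)
    (hY.integrable_mixDens_mul_mixDens_div_gaussDens hX hσ)
    (hY.integrable_mixDens_mul_mixDens_div_gaussDens hY hσ),
    hX.integral_mixDens_mul_mixDens_div_gaussDens hX hσ,
    hX.integral_mixDens_mul_mixDens_div_gaussDens hY hσ,
    hY.integral_mixDens_mul_mixDens_div_gaussDens hX hσ,
    hY.integral_mixDens_mul_mixDens_div_gaussDens hY hσ,
    (hX.const_smul σ⁻¹).integral_mixedDiff (hY.const_smul σ⁻¹) Real.continuous_exp]

lemma IsAEBoundedBy.integral_sq_mixDens_sub_div_gaussDens_le [IsProbabilityMeasure μ]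
    (hX : IsAEBoundedBy X R μ) (hY : IsAEBoundedBy Y R μ) (hσ : σ ≠ 0)
    (hmean : ∫ t, X t ∂μ = ∫ t, Y t ∂μ)
    (hsecond : ∀ j k, ∫ t, X t j * X t k ∂μ = ∫ t, Y t j * Y t k ∂μ) :
    ∫ x, (mixDens μ X σ x - mixDens μ Y σ x) ^ 2 / gaussDens d σ x ≤
      3 * R ^ 4 / σ ^ 6 * Real.exp (R ^ 2 / σ ^ 2) * ∫ t, ‖X t - Y t‖ ^ 2 ∂μ := by
  have hlin (v : EuclideanSpace ℝ (Fin d)) : ∫ t, ⟪X t, v⟫ ∂μ = ∫ t, ⟪Y t, v⟫ ∂μ := by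
    simp only [real_inner_comm v]
    rw [integral_inner hX.integrable, integral_inner hY.integrable, hmean]
  have hquad (v : EuclideanSpace ℝ (Fin d)) : ∫ t, ⟪X t, v⟫ ^ 2 ∂μ = ∫ t, ⟪Y t, v⟫ ^ 2 ∂μ := by
    simp only [integral_inner_sq_eq_sum (hX.memLp 2), integral_inner_sq_eq_sum (hY.memLp 2),
      hsecond]
  have hbound := (hX.const_smul σ⁻¹).integral_mixedDiff_exp_le (hY.const_smul σ⁻¹)
    (by simpa only [real_inner_smul_left, real_inner_smul_right] using fun v => hlin (σ⁻¹ • v))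
    (by simpa only [real_inner_smul_left, real_inner_smul_right] using fun v => hquad (σ⁻¹ • v))
  rw [hX.integral_sq_mixDens_sub_div_gaussDens hY hσ]
  refine hbound.trans_eq ?_
  simp only [← smul_sub, norm_smul, mul_pow, integral_const_mul, Real.norm_eq_abs, sq_abs,
    Even.pow_abs (show Even 4 by decide)]
  rw [inv_pow σ 2, inv_mul_eq_div (σ ^ 2)]
  ring

lemma IsAEBoundedBy.exp_mul_gaussDens_le_mixDens [IsProbabilityMeasure μ]
    (hX : IsAEBoundedBy X R μ) (hσ : σ ≠ 0) (hmean : ∫ t, X t ∂μ = 0)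
    (x : EuclideanSpace ℝ (Fin d)) :
    Real.exp (-(R ^ 2 / (2 * σ ^ 2))) * gaussDens d σ x ≤ mixDens μ X σ x := by
  have hφ := gaussDens_pos hσ x
  have hinner : Integrable (fun t => ⟪x, X t⟫ / σ ^ 2) μ :=
    (hX.integrable.const_inner x).div_const _
  have hinner_zero : ∫ t, ⟪x, X t⟫ / σ ^ 2 ∂μ = 0 := by
    rw [integral_div, integral_inner hX.integrable, hmean, inner_zero_right, zero_div]
  have htranslates : Integrable (fun t => gaussDens d σ (x - X t)) μ :=
    .of_bound (continuous_gaussDens.comp_aestronglyMeasurable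
      (aestronglyMeasurable_const.sub hX.aestronglyMeasurable)) (gaussDens d σ 0)
      (ae_of_all _ fun t => by
        rw [Real.norm_of_nonneg (gaussDens_pos hσ _).le]
        exact gaussDens_le_gaussDens_zero _)
  have hlower : ∀ᵐ t ∂μ, Real.exp (-(R ^ 2 / (2 * σ ^ 2))) * gaussDens d σ x *
      (1 + ⟪x, X t⟫ / σ ^ 2) ≤ gaussDens d σ (x - X t) := by
    filter_upwards [hX.ae_norm_le] with t ht
    calc Real.exp (-(R ^ 2 / (2 * σ ^ 2))) * gaussDens d σ x * (1 + ⟪x, X t⟫ / σ ^ 2)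
        ≤ Real.exp (-(R ^ 2 / (2 * σ ^ 2))) * gaussDens d σ x *
            Real.exp (⟪x, X t⟫ / σ ^ 2) := by
          gcongr
          rw [add_comm]
          exact Real.add_one_le_exp _
      _ ≤ Real.exp (-(‖X t‖ ^ 2 / (2 * σ ^ 2))) * gaussDens d σ x *
            Real.exp (⟪x, X t⟫ / σ ^ 2) := by gcongr
      _ = gaussDens d σ (x - X t) := by
          rw [gaussDens_sub, sub_eq_neg_add, Real.exp_add]
          ring
  calc Real.exp (-(R ^ 2 / (2 * σ ^ 2))) * gaussDens d σ x
      = ∫ t, Real.exp (-(R ^ 2 / (2 * σ ^ 2))) * gaussDens d σ x *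
          (1 + ⟪x, X t⟫ / σ ^ 2) ∂μ := by
        rw [integral_const_mul, integral_add (integrable_const 1) hinner, hinner_zero, add_zero,
          integral_const, probReal_univ, one_smul, mul_one]
    _ ≤ mixDens μ X σ x :=
        integral_mono_ae (((integrable_const 1).add hinner).const_mul _) htranslates hlower

lemma IsAEBoundedBy.integrable_sq_mixDens_div_mixDens [IsProbabilityMeasure μ]
    (hX : IsAEBoundedBy X R μ) (hY : IsAEBoundedBy Y R μ) (hσ : σ ≠ 0)
    (hY_mean : ∫ t, Y t ∂μ = 0) :
    Integrable fun x => mixDens μ X σ x ^ 2 / mixDens μ Y σ x :=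
  integrable_sq_div_of_mul_le (isProbDensity_mixDens hσ hX.aestronglyMeasurable)
    (isProbDensity_mixDens hσ hY.aestronglyMeasurable) (Real.exp_pos _) (gaussDens_pos hσ)
    (hY.exp_mul_gaussDens_le_mixDens hσ hY_mean)
    (hX.integrable_sq_mixDens_sub_div_gaussDens hY hσ)

lemma IsAEBoundedBy.integral_sq_mixDens_div_mixDens_le [IsProbabilityMeasure μ]
    (hX : IsAEBoundedBy X R μ) (hY : IsAEBoundedBy Y R μ) (hσ : σ ≠ 0)
    (hX_mean : ∫ t, X t ∂μ = 0) (hY_mean : ∫ t, Y t ∂μ = 0)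
    (hsecond : ∀ j k, ∫ t, X t j * X t k ∂μ = ∫ t, Y t j * Y t k ∂μ) :
    ∫ x, mixDens μ X σ x ^ 2 / mixDens μ Y σ x ≤
      1 + 3 * R ^ 4 / σ ^ 6 * Real.exp (3 * R ^ 2 / (2 * σ ^ 2)) * ∫ t, ‖X t - Y t‖ ^ 2 ∂μ := by
  refine (integral_sq_div_le_of_mul_le (isProbDensity_mixDens hσ hX.aestronglyMeasurable)
    (isProbDensity_mixDens hσ hY.aestronglyMeasurable) (Real.exp_pos _) (gaussDens_pos hσ)
    (hY.exp_mul_gaussDens_le_mixDens hσ hY_mean)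
    (hX.integrable_sq_mixDens_sub_div_gaussDens hY hσ)).trans ?_
  have hexp : Real.exp (3 * R ^ 2 / (2 * σ ^ 2)) =
      Real.exp (R ^ 2 / (2 * σ ^ 2)) * Real.exp (R ^ 2 / σ ^ 2) := by
    rw [← Real.exp_add]
    congr 1
    ring
  rw [← Real.exp_neg, neg_neg, hexp]
  calc 1 + Real.exp (R ^ 2 / (2 * σ ^ 2)) *
        ∫ x, (mixDens μ X σ x - mixDens μ Y σ x) ^ 2 / gaussDens d σ x
      ≤ 1 + Real.exp (R ^ 2 / (2 * σ ^ 2)) *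
          (3 * R ^ 4 / σ ^ 6 * Real.exp (R ^ 2 / σ ^ 2) * ∫ t, ‖X t - Y t‖ ^ 2 ∂μ) := by
        gcongr
        exact hX.integral_sq_mixDens_sub_div_gaussDens_le hY hσ (hX_mean.trans hY_mean.symm)
          hsecond
    _ = _ := by ring

end GaussianMixture

lemma half_le_one_sub_sqrt_pow_sub_one {M x : ℝ} {N : ℕ} (hM : 0 ≤ M) (hMx : M ≤ 1 + x)
    (hN : N * x ≤ Real.log 2) : 1 / 2 ≤ 1 - √(M ^ N - 1) / 2 := by
  have hpow : M ^ N ≤ 2 := calc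
    M ^ N ≤ Real.exp x ^ N := by
        gcongr
        linarith [Real.add_one_le_exp x]
    _ = Real.exp (N * x) := (Real.exp_nat_mul x N).symm
    _ ≤ Real.exp (Real.log 2) := Real.exp_le_exp.2 hN
    _ = 2 := Real.exp_log two_pos
  have hsqrt : √(M ^ N - 1) ≤ 1 := Real.sqrt_le_one.2 (by linarith)
  linarith

theorem sample_complexity_lower_bound_general {T : Type*} [MeasurableSpace T] {μ : Measure T}
    [IsProbabilityMeasure μ] {d : ℕ} {X Y : T → EuclideanSpace ℝ (Fin d)} {R σ : ℝ}
    (hX : IsAEBoundedBy X R μ) (hY : IsAEBoundedBy Y R μ) (hσ : σ ≠ 0)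
    (hX_mean : ∫ t, X t ∂μ = 0) (hY_mean : ∫ t, Y t ∂μ = 0)
    (hsecond : ∀ j k, ∫ t, X t j * X t k ∂μ = ∫ t, Y t j * Y t k ∂μ) {N : ℕ}
    (hN : N * (3 * R ^ 4 / σ ^ 6 * Real.exp (3 * R ^ 2 / (2 * σ ^ 2)) *
      ∫ t, ‖X t - Y t‖ ^ 2 ∂μ) ≤ Real.log 2)
    {ψ : (Fin N → EuclideanSpace ℝ (Fin d)) → Bool} (hψ : Measurable ψ) :
    (1 / 2 : ℝ≥0∞) ≤
      Measure.pi (fun _ : Fin N => mixMeasure μ X σ) {y | ψ y = true}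
        + Measure.pi (fun _ : Fin N => mixMeasure μ Y σ) {y | ψ y = false} := by
  have hp := isProbDensity_mixDens hσ hX.aestronglyMeasurable
  have hq := isProbDensity_mixDens hσ hY.aestronglyMeasurable
  have hq_pos (x : EuclideanSpace ℝ (Fin d)) : 0 < mixDens μ Y σ x :=
    (mul_pos (Real.exp_pos _) (gaussDens_pos hσ x)).trans_le
      (hY.exp_mul_gaussDens_le_mixDens hσ hY_mean x)
  have herror := one_sub_sqrt_le_pi_error_add_error hp hq hq_pos
    (hX.integrable_sq_mixDens_div_mixDens hY hσ hY_mean)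
    (hψ (measurableSet_singleton true))
  rw [Fintype.card_fin] at herror
  have hcompl : {y | ψ y = false} = (ψ ⁻¹' {true})ᶜ := by
    ext y
    simp only [mem_ofPred_eq, mem_compl_iff, mem_preimage, mem_singleton_iff, Bool.not_eq_true]
  rw [hcompl]
  refine le_trans ?_ herror
  rw [show (1 / 2 : ℝ≥0∞) = ENNReal.ofReal (1 / 2) by
    rw [ENNReal.ofReal_div_of_pos two_pos, ENNReal.ofReal_one, ENNReal.ofReal_ofNat]]
  exact ENNReal.ofReal_le_ofReal <| half_le_one_sub_sqrt_pow_sub_one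
    (integral_nonneg fun x => div_nonneg (sq_nonneg _) (hq.nonneg x))
    (hX.integral_sq_mixDens_div_mixDens_le hY hσ hX_mean hY_mean hsecond) hN

lemma noisyMeasure_eq_mixMeasure {d : ℕ} (C : ℝ → EuclideanSpace ℝ (Fin d)) (σ : ℝ) :
    noisyMeasure C σ = mixMeasure (volume.restrict (Ioc 0 1)) C σ := by
  simp only [noisyMeasure, noisyDens, mixMeasure, mixDens,
    intervalIntegral.integral_of_le zero_le_one]

/-- There is a universal constant `c > 0` such that for mean-zero curves
`C, Γ` (bounded by 1, uniformly `1/3`-close) whose first and second moments agree, with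
`Δ = ρ(C,Γ) > 0` and `σ ≥ 1`: for every `N ≤ c σ⁶/Δ` and every measurable test
`ψ : (ℝ^d)^N → {0,1}`, `P_{C,σ}^{⊗N}(ψ = 1) + P_{Γ,σ}^{⊗N}(ψ = 0) ≥ 1/2`. -/
theorem sample_complexity_lower_bound :
    ∃ c : ℝ, 0 < c ∧
      ∀ (d : ℕ) (C Γ : ℝ → EuclideanSpace ℝ (Fin d)),
        Continuous C → Continuous Γ →
        (∫ t in (0:ℝ)..1, C t) = 0 → (∫ t in (0:ℝ)..1, Γ t) = 0 →
        (∀ t ∈ Set.Icc (0:ℝ) 1, ‖C t - Γ t‖ ≤ 1 / 3) →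
        (∀ t ∈ Set.Icc (0:ℝ) 1, ‖C t‖ < 1) →
        (∀ t ∈ Set.Icc (0:ℝ) 1, ‖Γ t‖ < 1) →
        (∀ j : Fin d, (∫ t in (0:ℝ)..1, C t j) = ∫ t in (0:ℝ)..1, Γ t j) →
        (∀ j k : Fin d,
          (∫ t in (0:ℝ)..1, C t j * C t k) = ∫ t in (0:ℝ)..1, Γ t j * Γ t k) →
        ∀ Δ : ℝ, Δ = (∫ t in (0:ℝ)..1, ‖C t - Γ t‖ ^ 2) → 0 < Δ →
        ∀ σ : ℝ, 1 ≤ σ →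
        ∀ N : ℕ, (N : ℝ) ≤ c * σ ^ 6 / Δ →
        ∀ ψ : (Fin N → EuclideanSpace ℝ (Fin d)) → Bool, Measurable ψ →
          (1 / 2 : ℝ≥0∞) ≤
            Measure.pi (fun _ : Fin N => noisyMeasure C σ) {y | ψ y = true}
              + Measure.pi (fun _ : Fin N => noisyMeasure Γ σ) {y | ψ y = false} := by
  refine ⟨Real.log 2 / (3 * Real.exp (3 / 2)), by positivity, ?_⟩
  intro d C Γ hC hΓ hC_mean hΓ_mean _ hC_lt hΓ_lt _ hsecond Δ hΔ hΔ_pos σ hσ N hN ψ hψ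
  simp only [intervalIntegral.integral_of_le zero_le_one] at hC_mean hΓ_mean hsecond hΔ
  have : IsProbabilityMeasure (volume.restrict (Ioc (0 : ℝ) 1)) := ⟨by simp⟩
  have hσ_pos : 0 < σ := one_pos.trans_le hσ
  have hexp : Real.exp (3 * 1 ^ 2 / (2 * σ ^ 2)) ≤ Real.exp (3 / 2) := by
    gcongr
    · norm_num
    · nlinarith
  rw [noisyMeasure_eq_mixMeasure, noisyMeasure_eq_mixMeasure]
  refine sample_complexity_lower_bound_general
    (isAEBoundedBy_restrict measurableSet_Ioc hC.continuousOn fun t ht =>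
      (hC_lt t (Ioc_subset_Icc_self ht)).le)
    (isAEBoundedBy_restrict measurableSet_Ioc hΓ.continuousOn fun t ht =>
      (hΓ_lt t (Ioc_subset_Icc_self ht)).le) hσ_pos.ne' hC_mean hΓ_mean hsecond ?_ hψ
  rw [← hΔ]
  calc (N : ℝ) * (3 * 1 ^ 4 / σ ^ 6 * Real.exp (3 * 1 ^ 2 / (2 * σ ^ 2)) * Δ)
      ≤ Real.log 2 / (3 * Real.exp (3 / 2)) * σ ^ 6 / Δ *
          (3 * 1 ^ 4 / σ ^ 6 * Real.exp (3 / 2) * Δ) := by gcongr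
    _ = Real.log 2 := by field_simp
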